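/- arXiv:1605.02571 — 2 statements merged into one kernel-verified Lean document; each statement's English description precedes it below -/
import Mathlib

section
/- Let X be a Tychonoff space and λ ∈ Ψ. The space C_λ(X) has countable tightness if and only if X is λ-Lindelöf. -/
open Set Filter Topology TopologicalSpace ContinuousMap

/-- A subset `A` of `X` is *C-compact* if `f '' A` is compact in `ℝ` for every
continuous real-valued function `f` on `X`. -/
def IsCCompact {X : Type*} [TopologicalSpace X] (A : Set X) : Prop :=
  ∀ f : C(X, ℝ), IsCompact (f '' A)

/-- The `λ`-open (set-open) topology on `C(X, ℝ)`, generated by the subbasic sets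
`[F, U] = {f : f '' F ⊆ U}` for `F ∈ lam` and `U ⊆ ℝ` open. -/
def setOpenTopology {X : Type*} [TopologicalSpace X] (lam : Set (Set X)) :
    TopologicalSpace C(X, ℝ) :=
  TopologicalSpace.generateFrom
    {S | ∃ F ∈ lam, ∃ U : Set ℝ, IsOpen U ∧ S = {f : C(X, ℝ) | f '' F ⊆ U}}

/-- Membership in the collection `Ψ`: a family of nonempty closed C-compact subsets of `X`
forming a π-network, hereditary with respect to (closed) C-compact subsets of its elements,
and maximal among families of nonempty sets inducing the same set-open topology. -/
structure MemPsi {X : Type*} [TopologicalSpace X] (lam : Set (Set X)) : Prop where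
  nonempty : ∀ A ∈ lam, A.Nonempty
  closed : ∀ A ∈ lam, IsClosed A
  ccompact : ∀ A ∈ lam, IsCCompact A
  piNetwork : ∀ U : Set X, IsOpen U → U.Nonempty → ∃ A ∈ lam, A ⊆ U
  hereditary : ∀ A ∈ lam, ∀ B : Set X, B ⊆ A → B.Nonempty → IsClosed B → IsCCompact B →
    B ∈ lam
  maximal : ∀ lam' : Set (Set X), (∀ A ∈ lam', A.Nonempty) →
    setOpenTopology lam' = setOpenTopology lam → lam' ⊆ lam

/-- A cozero (functional open) subset of `X`: the complement of a zero-set. -/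
def IsCozero {X : Type*} [TopologicalSpace X] (U : Set X) : Prop :=
  ∃ f : C(X, ℝ), U = {x | f x ≠ 0}

/-- `𝒰` is a `λ`-f-cover: a family of cozero sets, not containing `X`, such that every
member of `lam` is contained in some member of `𝒰`. -/
def IsFCover {X : Type*} [TopologicalSpace X] (lam : Set (Set X)) (𝒰 : Set (Set X)) : Prop :=
  (Set.univ : Set X) ∉ 𝒰 ∧ (∀ U ∈ 𝒰, IsCozero U) ∧ ∀ A ∈ lam, ∃ U ∈ 𝒰, A ⊆ U

/-- `Λ(λ)`: the collection of all `λ`-f-covers of `X`. -/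
def fCovers {X : Type*} [TopologicalSpace X] (lam : Set (Set X)) : Set (Set (Set X)) :=
  {𝒰 | IsFCover lam 𝒰}

/-- The selection principle `S₁(𝒜, ℬ)`. -/
def S1 {α : Type*} (𝒜 ℬ : Set (Set α)) : Prop :=
  ∀ A : ℕ → Set α, (∀ n, A n ∈ 𝒜) →
    ∃ b : ℕ → α, (∀ n, b n ∈ A n) ∧ Set.range b ∈ ℬ

/-- The selection principle `S_fin(𝒜, ℬ)`. -/
def Sfin {α : Type*} (𝒜 ℬ : Set (Set α)) : Prop :=
  ∀ A : ℕ → Set α, (∀ n, A n ∈ 𝒜) →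
    ∃ B : ℕ → Set α, (∀ n, (B n).Finite ∧ B n ⊆ A n) ∧ (⋃ n, B n) ∈ ℬ

/-- `Ω_y` with respect to the topology `t`: sets having `y` in their closure but not
containing `y`. -/
def OmegaPt {Y : Type*} (t : TopologicalSpace Y) (y : Y) : Set (Set Y) :=
  {A | y ∈ @closure Y t A ∧ y ∉ A}

/-- Countable `(t₁, t₂)`-tightness of a bitopological space. -/
def CountableBiTightness {Y : Type*} (t1 t2 : TopologicalSpace Y) : Prop :=
  ∀ A : Set Y, ∀ f ∈ @closure Y t1 A, ∃ B ⊆ A, B.Countable ∧ f ∈ @closure Y t2 B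

/-- `X` is `λ`-`μ`-Lindelöf: every `λ`-f-cover has a countable subfamily which is a
`μ`-f-cover. -/
def LamMuLindelof {X : Type*} [TopologicalSpace X] (lam mu : Set (Set X)) : Prop :=
  ∀ 𝒰 : Set (Set X), IsFCover lam 𝒰 → ∃ 𝒱 ⊆ 𝒰, 𝒱.Countable ∧ IsFCover mu 𝒱

/-- Countable `(t₁, t₂)`-T-tightness: for every uncountable regular cardinal `κ` and every
increasing `κ`-indexed sequence of `t₁`-closed sets, the union is `t₂`-closed. -/
def CountableBiTTightness {Y : Type*} (t1 t2 : TopologicalSpace Y) : Prop :=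
  ∀ κ : Cardinal.{0}, Cardinal.aleph0 < κ → κ.IsRegular →
    ∀ A : κ.ord.ToType → Set Y, Monotone A → (∀ α, @IsClosed Y t1 (A α)) →
      @IsClosed Y t2 (⋃ α, A α)

/-- `X` is separably `λ`-submetrizable: there is a continuous map of `X` onto a separable
metric space which is one-to-one on `⋃ lam`. -/
def SeparablyLamSubmetrizable (X : Type*) [TopologicalSpace X] (lam : Set (Set X)) : Prop :=
  ∃ (Y : Type) (m : MetricSpace Y),
    @SeparableSpace Y m.toPseudoMetricSpace.toUniformSpace.toTopologicalSpace ∧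
    ∃ f : X → Y,
      @Continuous X Y _ m.toPseudoMetricSpace.toUniformSpace.toTopologicalSpace f ∧
      Function.Surjective f ∧ Set.InjOn f (⋃₀ lam)

/-- `R`-separability for a pair of topologies: from every sequence of `t₁`-dense sets one
can pick single points forming a `t₂`-dense set. -/
def RSepBi {Y : Type*} (t1 t2 : TopologicalSpace Y) : Prop :=
  ∀ D : ℕ → Set Y, (∀ n, @Dense Y t1 (D n)) →
    ∃ d : ℕ → Y, (∀ n, d n ∈ D n) ∧ @Dense Y t2 (Set.range d)

/-- `M`-separability for a pair of topologies. -/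
def MSepBi {Y : Type*} (t1 t2 : TopologicalSpace Y) : Prop :=
  ∀ D : ℕ → Set Y, (∀ n, @Dense Y t1 (D n)) →
    ∃ F : ℕ → Set Y, (∀ n, (F n).Finite ∧ F n ⊆ D n) ∧ @Dense Y t2 (⋃ n, F n)

/-- `H`-separability for a pair of topologies. -/
def HSepBi {Y : Type*} (t1 t2 : TopologicalSpace Y) : Prop :=
  ∀ D : ℕ → Set Y, (∀ n, @Dense Y t1 (D n)) →
    ∃ F : ℕ → Set Y, (∀ n, (F n).Finite ∧ F n ⊆ D n) ∧
      ∀ G : Set Y, @IsOpen Y t2 G → G.Nonempty →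
        ∀ᶠ n in Filter.atTop, (G ∩ F n).Nonempty

/-- A countable set `D` is groupable with respect to the topology `t`. -/
def GroupableIn {Y : Type*} (t : TopologicalSpace Y) (D : Set Y) : Prop :=
  ∃ A : ℕ → Set Y, (∀ n, (A n).Finite) ∧ D = ⋃ n, A n ∧
    ∀ G : Set Y, @IsOpen Y t G → G.Nonempty →
      ∀ᶠ n in Filter.atTop, (G ∩ A n).Nonempty

/-- `GN`-separability for a pair of topologies. -/
def GNSepBi {Y : Type*} (t1 t2 : TopologicalSpace Y) : Prop :=
  ∀ D : ℕ → Set Y, (∀ n, @Dense Y t1 (D n)) →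
    ∃ d : ℕ → Y, (∀ n, d n ∈ D n) ∧ @Dense Y t2 (Set.range d) ∧
      GroupableIn t2 (Set.range d)

/-- The `(t₁, t₂)`-Pytkeev property for a bitopological space. -/
def PytkeevBi {Y : Type*} (t1 t2 : TopologicalSpace Y) : Prop :=
  ∀ A : Set Y, ∀ g ∈ @closure Y t1 A, g ∉ A →
    ∃ B : ℕ → Set Y, (∀ n, (B n).Infinite ∧ B n ⊆ A) ∧
      ∀ G ∈ @nhds Y t2 g, ∃ n, B n ⊆ G

/-- A groupable `μ`-f-cover. -/
def GroupableFCover {X : Type*} [TopologicalSpace X] (mu 𝒱 : Set (Set X)) : Prop :=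
  𝒱.Countable ∧ IsFCover mu 𝒱 ∧
    ∃ G : ℕ → Set (Set X), (∀ m, (G m).Finite) ∧
      (Pairwise fun m k => Disjoint (G m) (G k)) ∧ 𝒱 = ⋃ m, G m ∧
      ∀ F ∈ mu, ∀ᶠ m in Filter.atTop, ∃ U ∈ G m, F ⊆ U

/-!
For a C-compact set `F` and a continuous `f`, the image `f '' F` is compact, and this makes the
`λ`-open topology of a hereditary family of C-compact sets the topology of uniform convergence on
the members of `λ`. Maximality makes `λ` stable under unions, hence directed, so `f` lies in the
closure of `A` iff for every `ε > 0` each member of `λ` carries an `ε`-approximation of `f` from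
`A`. Such approximations correspond to covers:

* given `A`, `f` and `ε`, the cozero sets `{x | |g x - f x| < ε}`, `g ∈ A`, cover `λ`, and a
  countable subcover for each `ε = 1 / (n + 1)` gives a countable subset of `A` approximating `f`;
* given a cover `𝒰`, the functions equal to `1` off some member of `𝒰` approximate `0`, because a
  C-compact set inside a cozero set is functionally separated from its complement. If countably
  many of them still approximate `0` within `1`, the corresponding members of `𝒰` form a cover.
-/

theorem exists_countable_subset_forall_exists {α β : Type*} {s : Set α} {t : Set β}
    {r : α → β → Prop} (hs : s.Countable) (h : ∀ a ∈ s, ∃ b ∈ t, r a b) :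
    ∃ u ⊆ t, u.Countable ∧ ∀ a ∈ s, ∃ b ∈ u, r a b := by
  have := hs.to_subtype
  choose c hct hc using h
  exact ⟨range fun a : s ↦ c a a.2, range_subset_iff.2 fun a ↦ hct a a.2, countable_range _,
    fun a ha ↦ ⟨c a ha, mem_range_self (⟨a, ha⟩ : s), hc a ha⟩⟩

section CCompact

variable {X : Type*} [TopologicalSpace X]

theorem IsCCompact.inter_preimage {Y : Type*} [PseudoMetricSpace Y] {F : Set X}
    (hF : IsCCompact F) (f : C(X, Y)) {K : Set Y} (hK : IsClosed K) : IsCCompact (F ∩ f ⁻¹' K) := by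
  intro g
  refine (hF g).of_isClosed_subset (isClosed_of_closure_subset fun y hy ↦ ?_)
    (image_mono inter_subset_left)
  have hKne : K.Nonempty := by
    obtain ⟨_, x, ⟨-, hxK⟩, -⟩ := closure_nonempty_iff.1 ⟨y, hy⟩
    exact ⟨f x, hxK⟩
  -- `h` vanishes exactly where `g` takes the value `y` and `f` takes a value in `K`.
  let h : C(X, ℝ) := ⟨fun x ↦ dist (g x) y + Metric.infDist (f x) K, by fun_prop⟩
  have zero_mem_closure : (0 : ℝ) ∈ closure (h '' F) := by
    rw [Metric.mem_closure_iff] at hy ⊢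
    intro ε hε
    obtain ⟨_, ⟨x, ⟨hxF, (hxK : f x ∈ K)⟩, rfl⟩, hdist⟩ := hy ε hε
    refine ⟨h x, mem_image_of_mem h hxF, ?_⟩
    simpa [h, Metric.infDist_zero_of_mem hxK, Real.dist_eq, abs_sub_comm] using hdist
  rw [(hF h).isClosed.closure_eq] at zero_mem_closure
  obtain ⟨x, hxF, hx⟩ := zero_mem_closure
  obtain ⟨hgx, hfx⟩ :=
    (add_eq_zero_iff_of_nonneg dist_nonneg Metric.infDist_nonneg).1 hx
  exact ⟨x, ⟨hxF, (hK.mem_iff_infDist_zero hKne).2 hfx⟩, dist_eq_zero.1 hgx⟩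

theorem IsCCompact.exists_eqOn_zero_eqOn_one {F U : Set X} (hF : IsCCompact F)
    (hU : IsCozero U) (hFU : F ⊆ U) : ∃ f : C(X, ℝ), EqOn f 0 F ∧ EqOn f 1 Uᶜ := by
  obtain ⟨h, rfl⟩ := hU
  have disjoint_image : Disjoint (h '' F) {0} := by
    rw [disjoint_singleton_right]
    rintro ⟨x, hxF, hx⟩
    exact hFU hxF hx
  obtain ⟨u, hu₀, hu₁, -⟩ :=
    exists_continuous_zero_one_of_isClosed (hF h).isClosed isClosed_singleton disjoint_image
  exact ⟨u.comp h, fun x hx ↦ hu₀ (mem_image_of_mem h hx), fun x hx ↦ hu₁ (not_not.1 hx)⟩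

theorem isCozero_setOf_lt (f g : C(X, ℝ)) : IsCozero {x | f x < g x} :=
  ⟨⟨fun x ↦ max 0 (g x - f x), by fun_prop⟩, by ext x; simp⟩

end CCompact

section SetOpenTopology

variable {X : Type*} [TopologicalSpace X] {lam : Set (Set X)}

theorem setOpenTopology_empty : setOpenTopology (∅ : Set (Set X)) = ⊤ :=
  top_unique (le_generateFrom (by simp))

theorem isOpen_setOf_image_subset {F : Set X} (hF : F ∈ lam) {U : Set ℝ} (hU : IsOpen U) :
    IsOpen[setOpenTopology lam] {f : C(X, ℝ) | f '' F ⊆ U} :=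
  isOpen_generateFrom_of_mem ⟨F, hF, U, hU, rfl⟩

theorem setOpenTopology_insert_union {A B : Set X} (hA : A ∈ lam) (hB : B ∈ lam) :
    setOpenTopology (insert (A ∪ B) lam) = setOpenTopology lam := by
  refine le_antisymm (le_generateFrom ?_) (le_generateFrom ?_)
  · rintro _ ⟨F, hF, U, hU, rfl⟩
    exact isOpen_setOf_image_subset (mem_insert_of_mem _ hF) hU
  · rintro _ ⟨F, rfl | hF, U, hU, rfl⟩
    · simp only [image_union, union_subset_iff]
      exact (setOpenTopology lam).isOpen_inter _ _ (isOpen_setOf_image_subset hA hU)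
        (isOpen_setOf_image_subset hB hU)
    · exact isOpen_setOf_image_subset hF hU

/-- The topology of uniform convergence on the members of `lam`, on the space of continuous
functions. -/
abbrev uniformOnTopology (lam : Set (Set X)) : TopologicalSpace C(X, ℝ) :=
  .induced (fun f : C(X, ℝ) ↦ UniformOnFun.ofFun lam f) (UniformOnFun.topologicalSpace X ℝ lam)

theorem eventually_forall_dist_lt_uniformOnTopology (f : C(X, ℝ)) {F : Set X} (hF : F ∈ lam)
    {ε : ℝ} (hε : 0 < ε) :
    ∀ᶠ g in @nhds _ (uniformOnTopology lam) f, ∀ x ∈ F, dist (f x) (g x) < ε := by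
  rw [nhds_induced]
  exact tendsto_comap.eventually
    (UniformOnFun.gen_mem_nhds ℝ lam _ hF (Metric.dist_mem_uniformity hε))

theorem uniformOnTopology_le_setOpenTopology (hlam : ∀ F ∈ lam, IsCCompact F) :
    uniformOnTopology lam ≤ setOpenTopology lam := by
  refine le_generateFrom ?_
  rintro _ ⟨F, hF, U, hU, rfl⟩
  let := uniformOnTopology lam
  refine isOpen_iff_mem_nhds.2 fun f hfU ↦ ?_
  obtain ⟨δ, hδ, thickening_subset⟩ := (hlam F hF f).exists_thickening_subset_open hU hfU
  filter_upwards [eventually_forall_dist_lt_uniformOnTopology f hF hδ] with g hg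
  rintro _ ⟨x, hx, rfl⟩
  exact thickening_subset (Metric.mem_thickening_iff.2
    ⟨f x, mem_image_of_mem f hx, by simpa only [dist_comm] using hg x hx⟩)

/-- The part of membership in `Ψ` under which the set-open topology is the topology of uniform
convergence on members of the family: they are C-compact, and the family contains their nonempty
subsets cut out by the values of a continuous function. Finite sets, or compact sets, of an
arbitrary space form such a family. -/
structure IsHereditaryCCompact (lam : Set (Set X)) : Prop where
  ccompact : ∀ F ∈ lam, IsCCompact F
  inter_preimage_mem : ∀ F ∈ lam, ∀ (f : C(X, ℝ)) (K : Set ℝ), IsClosed K →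
    (F ∩ f ⁻¹' K).Nonempty → F ∩ f ⁻¹' K ∈ lam

/-- Cover `f '' F` by finitely many small balls around `y ∈ t`; the subbasic conditions on `g` are
that the part of `F` where `f` is near `y` is mapped near `y`. -/
theorem IsHereditaryCCompact.eventually_forall_dist_lt_setOpenTopology
    (hlam : IsHereditaryCCompact lam) (f : C(X, ℝ)) {F : Set X} (hF : F ∈ lam) {ε : ℝ}
    (hε : 0 < ε) :
    ∀ᶠ g in @nhds _ (setOpenTopology lam) f, ∀ x ∈ F, dist (f x) (g x) < ε := by
  let := setOpenTopology lam
  obtain ⟨t, ht, ht_fin, ht_cover⟩ := (hlam.ccompact F hF f).finite_cover_balls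
    (by positivity : 0 < ε / 4)
  have eventually_image_subset : ∀ y ∈ t, ∀ᶠ g : C(X, ℝ) in 𝓝 f,
      g '' (F ∩ f ⁻¹' Metric.closedBall y (ε / 4)) ⊆ Metric.ball y (ε / 2) := by
    intro y hy
    obtain ⟨x, hxF, rfl⟩ := ht hy
    have piece_mem : F ∩ f ⁻¹' Metric.closedBall (f x) (ε / 4) ∈ lam :=
      hlam.inter_preimage_mem F hF f _ Metric.isClosed_closedBall
        ⟨x, hxF, Metric.mem_closedBall_self (by positivity)⟩
    refine (isOpen_setOf_image_subset piece_mem Metric.isOpen_ball).mem_nhds ?_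
    rintro _ ⟨z, ⟨-, hz⟩, rfl⟩
    exact Metric.closedBall_subset_ball (by linarith) hz
  filter_upwards [ht_fin.eventually_all.2 eventually_image_subset] with g hg x hx
  obtain ⟨y, hy, hfxy⟩ := mem_iUnion₂.1 (ht_cover (mem_image_of_mem f hx))
  have hgxy : dist (g x) y < ε / 2 :=
    hg y hy (mem_image_of_mem g ⟨hx, Metric.ball_subset_closedBall hfxy⟩)
  calc dist (f x) (g x) ≤ dist (f x) y + dist (g x) y := dist_triangle_right _ _ _
    _ < ε / 4 + ε / 2 := add_lt_add hfxy hgxy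
    _ < ε := by linarith

theorem IsHereditaryCCompact.setOpenTopology_eq (hlam : IsHereditaryCCompact lam) :
    setOpenTopology lam = uniformOnTopology lam := by
  refine le_antisymm ?_ (uniformOnTopology_le_setOpenTopology hlam.ccompact)
  let := setOpenTopology lam
  rw [← continuous_iff_le_induced, continuous_iff_continuousAt]
  intro f
  refine UniformOnFun.tendsto_iff_tendstoUniformlyOn.2 fun F hF ↦ ?_
  exact Metric.tendstoUniformlyOn_iff.2 fun ε hε ↦
    hlam.eventually_forall_dist_lt_setOpenTopology f hF hε

end SetOpenTopology

section Approximation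

variable {X : Type*} [TopologicalSpace X] {lam mu : Set (Set X)}

/-- `f` is uniformly approximated within `ε` by functions of `A`, on each member of `lam`
separately: the approximating function may depend on the member. -/
def IsApproximated (lam : Set (Set X)) (ε : ℝ) (A : Set C(X, ℝ)) (f : C(X, ℝ)) : Prop :=
  ∀ F ∈ lam, ∃ g ∈ A, ∀ x ∈ F, dist (f x) (g x) < ε

theorem isApproximated_of_mem_closure {A : Set C(X, ℝ)} {f : C(X, ℝ)}
    (hf : f ∈ @closure _ (uniformOnTopology lam) A) {ε : ℝ} (hε : 0 < ε) :
    IsApproximated lam ε A f := by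
  let := uniformOnTopology lam
  intro F hF
  obtain ⟨g, hg, hgA⟩ :=
    mem_closure_iff_nhds.1 hf _ (eventually_forall_dist_lt_uniformOnTopology f hF hε)
  exact ⟨g, hgA, hg⟩

theorem mem_closure_of_isApproximated (hne : lam.Nonempty) (hdir : DirectedOn (· ⊆ ·) lam)
    {A : Set C(X, ℝ)} {f : C(X, ℝ)} (happ : ∀ ε > 0, IsApproximated lam ε A f) :
    f ∈ @closure _ (uniformOnTopology lam) A := by
  rw [closure_induced, mem_closure_iff_nhds_basis
    (UniformOnFun.hasBasis_nhds_of_basis X ℝ lam _ hne hdir Metric.uniformity_basis_dist)]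
  rintro ⟨F, ε⟩ ⟨hF, hε⟩
  obtain ⟨g, hgA, hg⟩ := happ ε hε F hF
  exact ⟨_, mem_image_of_mem _ hgA, fun x hx ↦ (dist_comm (g x) (f x)).trans_lt (hg x hx)⟩

theorem IsFCover.isApproximated_zero {𝒰 : Set (Set X)} (h𝒰 : IsFCover lam 𝒰)
    (hlam : ∀ F ∈ lam, IsCCompact F) {ε : ℝ} (hε : 0 < ε) :
    IsApproximated lam ε {f : C(X, ℝ) | ∃ U ∈ 𝒰, EqOn f 1 Uᶜ} 0 := by
  intro F hF
  obtain ⟨U, hU, hFU⟩ := h𝒰.2.2 F hF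
  obtain ⟨f, hf₀, hf₁⟩ := (hlam F hF).exists_eqOn_zero_eqOn_one (h𝒰.2.1 U hU) hFU
  exact ⟨f, ⟨U, hU, hf₁⟩, fun x hx ↦ by simpa [hf₀ hx] using hε⟩

theorem IsFCover.exists_countable_subset {𝒰 : Set (Set X)} (h𝒰 : IsFCover lam 𝒰)
    {B : Set C(X, ℝ)} (hB : B.Countable) (hB𝒰 : ∀ f ∈ B, ∃ U ∈ 𝒰, EqOn f 1 Uᶜ)
    (happ : IsApproximated mu 1 B 0) : ∃ 𝒱 ⊆ 𝒰, 𝒱.Countable ∧ IsFCover mu 𝒱 := by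
  obtain ⟨𝒱, h𝒱𝒰, h𝒱, hB𝒱⟩ := exists_countable_subset_forall_exists hB hB𝒰
  refine ⟨𝒱, h𝒱𝒰, h𝒱, fun h ↦ h𝒰.1 (h𝒱𝒰 h), fun V hV ↦ h𝒰.2.1 V (h𝒱𝒰 hV), fun F hF ↦ ?_⟩
  obtain ⟨f, hf, hfF⟩ := happ F hF
  obtain ⟨V, hV, hfV⟩ := hB𝒱 f hf
  refine ⟨V, hV, fun x hx ↦ by_contra fun hxV ↦ ?_⟩
  simpa [hfV hxV] using hfF x hx

theorem LamMuLindelof.exists_countable_isApproximated (h : LamMuLindelof lam mu) {ε : ℝ}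
    {A : Set C(X, ℝ)} {f : C(X, ℝ)} (happ : IsApproximated lam ε A f) :
    ∃ B ⊆ A, B.Countable ∧ IsApproximated mu ε B f := by
  let W : C(X, ℝ) → Set X := fun g ↦ {x | dist (f x) (g x) < ε}
  by_cases hW : univ ∈ W '' A
  -- `W '' A` is then not a cover, but a single function approximates `f` on all of `X`.
  · obtain ⟨g, hgA, hg⟩ := hW
    exact ⟨{g}, singleton_subset_iff.2 hgA, countable_singleton g, fun _ _ ↦
      ⟨g, rfl, fun x _ ↦ (eq_univ_iff_forall.1 hg) x⟩⟩
  · have hcover : IsFCover lam (W '' A) := by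
      refine ⟨hW, forall_mem_image.2 fun g _ ↦ ?_, fun F hF ↦ ?_⟩
      · exact isCozero_setOf_lt ⟨fun x ↦ dist (f x) (g x), by fun_prop⟩ (.const X ε)
      · obtain ⟨g, hgA, hg⟩ := happ F hF
        exact ⟨W g, mem_image_of_mem W hgA, hg⟩
    obtain ⟨𝒱, h𝒱W, h𝒱, -, -, h𝒱mu⟩ := h _ hcover
    obtain ⟨B, hBA, hB, h𝒱B⟩ := exists_countable_subset_forall_exists h𝒱 h𝒱W
    refine ⟨B, hBA, hB, fun F hF ↦ ?_⟩
    obtain ⟨V, hV, hFV⟩ := h𝒱mu F hF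
    obtain ⟨g, hg, rfl⟩ := h𝒱B V hV
    exact ⟨g, hg, hFV⟩

end Approximation

section Tightness

variable {X : Type*} [TopologicalSpace X] {lam mu : Set (Set X)}

theorem lamMuLindelof_of_countableBiTightness (hlam : ∀ F ∈ lam, IsCCompact F)
    (hne : lam.Nonempty) (hdir : DirectedOn (· ⊆ ·) lam)
    (h : CountableBiTightness (uniformOnTopology lam) (uniformOnTopology mu)) :
    LamMuLindelof lam mu := by
  intro 𝒰 h𝒰
  obtain ⟨B, hB𝒰, hB, zero_mem_closure⟩ := h _ 0 <|
    mem_closure_of_isApproximated hne hdir fun ε hε ↦ h𝒰.isApproximated_zero hlam hε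
  exact h𝒰.exists_countable_subset hB hB𝒰
    (isApproximated_of_mem_closure zero_mem_closure one_pos)

theorem countableBiTightness_of_lamMuLindelof (hne : mu.Nonempty)
    (hdir : DirectedOn (· ⊆ ·) mu) (h : LamMuLindelof lam mu) :
    CountableBiTightness (uniformOnTopology lam) (uniformOnTopology mu) := by
  intro A f hf
  choose B hBA hB happ using fun n : ℕ ↦ h.exists_countable_isApproximated
    (isApproximated_of_mem_closure hf (Nat.one_div_pos_of_nat (n := n)))
  refine ⟨⋃ n, B n, iUnion_subset hBA, countable_iUnion hB,
    mem_closure_of_isApproximated hne hdir fun ε hε F hF ↦ ?_⟩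
  obtain ⟨n, hn⟩ := exists_nat_one_div_lt hε
  obtain ⟨g, hg, hgF⟩ := happ n F hF
  exact ⟨g, mem_iUnion_of_mem n hg, fun x hx ↦ (hgF x hx).trans hn⟩

theorem lamMuLindelof_empty_right : LamMuLindelof lam ∅ := fun _ _ ↦
  ⟨∅, empty_subset _, countable_empty, by simp [IsFCover]⟩

theorem countableBiTightness_top_right {Y : Type*} (t : TopologicalSpace Y) :
    CountableBiTightness t ⊤ := by
  intro A y hy
  obtain ⟨a, ha⟩ := (@closure_nonempty_iff _ t _).1 ⟨y, hy⟩
  let : TopologicalSpace Y := ⊤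
  exact ⟨{a}, singleton_subset_iff.2 ha, countable_singleton a,
    dense_indiscrete (singleton_nonempty a) y⟩

theorem countableTightness_iff_lamLindelof_general (hlam : IsHereditaryCCompact lam)
    (hlam_dir : DirectedOn (· ⊆ ·) lam) (hmu : IsHereditaryCCompact mu)
    (hmu_dir : DirectedOn (· ⊆ ·) mu) (hne : mu.Nonempty → lam.Nonempty) :
    CountableBiTightness (setOpenTopology lam) (setOpenTopology mu) ↔ LamMuLindelof lam mu := by
  rcases mu.eq_empty_or_nonempty with rfl | hmu_ne
  · rw [setOpenTopology_empty]
    exact iff_of_true (countableBiTightness_top_right _) lamMuLindelof_empty_right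
  · rw [hlam.setOpenTopology_eq, hmu.setOpenTopology_eq]
    exact ⟨lamMuLindelof_of_countableBiTightness hlam.ccompact (hne hmu_ne) hlam_dir,
      countableBiTightness_of_lamMuLindelof hmu_ne hmu_dir⟩

end Tightness

namespace MemPsi

variable {X : Type*} [TopologicalSpace X] {lam : Set (Set X)}

theorem union_mem (hlam : MemPsi lam) {A B : Set X} (hA : A ∈ lam) (hB : B ∈ lam) :
    A ∪ B ∈ lam := by
  refine hlam.maximal (insert (A ∪ B) lam) ?_ (setOpenTopology_insert_union hA hB)
    (mem_insert _ _)
  exact forall_mem_insert.2 ⟨(hlam.nonempty A hA).inl, hlam.nonempty⟩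

theorem directedOn (hlam : MemPsi lam) : DirectedOn (· ⊆ ·) lam :=
  directedOn_of_sup_mem fun _ _ ↦ hlam.union_mem

theorem isHereditaryCCompact (hlam : MemPsi lam) : IsHereditaryCCompact lam where
  ccompact := hlam.ccompact
  inter_preimage_mem F hF f _ hK hne := hlam.hereditary F hF _ inter_subset_left hne
    ((hlam.closed F hF).inter (hK.preimage f.continuous))
    ((hlam.ccompact F hF).inter_preimage f hK)

end MemPsi

/-- For a Tychonoff space `X` and `λ ∈ Ψ`, the space `C_λ(X)` has countable
tightness iff `X` is `λ`-Lindelöf. -/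
theorem countableTightness_iff_lamLindelof
    {X : Type*} [TopologicalSpace X] [T35Space X]
    (lam : Set (Set X)) (hlam : MemPsi lam) :
    CountableBiTightness (setOpenTopology lam) (setOpenTopology lam) ↔
      LamMuLindelof lam lam :=
  countableTightness_iff_lamLindelof_general hlam.isHereditaryCCompact hlam.directedOn
    hlam.isHereditaryCCompact hlam.directedOn id
end

section
/- Let X be a Tychonoff space and λ ∈ Ψ, and suppose C_λ(X) is a separable space. Then every element of the family λ is a metrizable compact subset of X. -/
open Set Filter Topology TopologicalSpace ContinuousMap

/-!
Separability of `C_λ(X)` yields countably many continuous functions separating the points of `A`,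
that is, a continuous map of `X` into a metrizable product `ι → ℝ` that is injective on `A`. A
continuous map `f` into a metrizable space sends a C-compact set `A` to a closed set: for `p` in the
closure of `f '' A`, the real function `dist (f ·) p` has a closed image on `A`, so it attains `0`
there. In the product, `f '' A` is then compact, as a closed subset of the product of its compact
coordinate images. Since C-compactness passes to the intersection with a zero-set, and zero-sets are
a base for the closed sets of a Tychonoff space, `f` restricts to a closed embedding of `A` once it
is injective on `A`.
-/

section

variable {X : Type*} [TopologicalSpace X] {A : Set X}

namespace IsCCompact

lemma singleton (x : X) : IsCCompact {x} := fun f => by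
  rw [image_singleton]
  exact isCompact_singleton

lemma isClosed_image {Y : Type*} [TopologicalSpace Y] [MetrizableSpace Y] (hA : IsCCompact A)
    (f : C(X, Y)) : IsClosed (f '' A) := by
  let : MetricSpace Y := metrizableSpaceMetric Y
  refine isClosed_of_closure_subset fun p hp => ?_
  let d : C(X, ℝ) := ⟨fun x => dist (f x) p, by fun_prop⟩
  have zero_mem_closure : (0 : ℝ) ∈ closure (d '' A) := by
    have h := map_mem_closure (continuous_id.dist continuous_const) hp
      (forall_mem_image.mpr fun x hx => mem_image_of_mem d hx)
    rwa [id_eq, dist_self] at h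
  obtain ⟨x, hx, hdx⟩ := (hA d).isClosed.closure_subset zero_mem_closure
  exact ⟨x, hx, dist_eq_zero.mp hdx⟩

lemma isCompact_image_pi {ι : Type*} [Countable ι] (hA : IsCCompact A) (f : C(X, ι → ℝ)) :
    IsCompact (f '' A) := by
  have hcoord (i : ι) : IsCompact ((fun x => f x i) '' A) := hA ⟨fun x => f x i, by fun_prop⟩
  refine (isCompact_univ_pi hcoord).of_isClosed_subset (hA.isClosed_image f) ?_
  rintro _ ⟨x, hx, rfl⟩ i -
  exact mem_image_of_mem _ hx

lemma inter_preimage_s9 (hA : IsCCompact A) (g : C(X, ℝ)) {C : Set ℝ} (hC : IsClosed C) :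
    IsCCompact (A ∩ g ⁻¹' C) := fun f => by
  have hpair : IsCompact (f.prodMk g '' A) := by
    refine ((hA f).prod (hA g)).of_isClosed_subset (hA.isClosed_image _) ?_
    rintro _ ⟨x, hx, rfl⟩
    exact ⟨mem_image_of_mem f hx, mem_image_of_mem g hx⟩
  have himage : f '' (A ∩ g ⁻¹' C) = Prod.fst '' (f.prodMk g '' A ∩ Prod.snd ⁻¹' C) := by
    rw [← image_inter_preimage, image_image]
    rfl
  rw [himage]
  exact (hpair.inter_right (hC.preimage continuous_snd)).image continuous_fst

lemma isClosed_image_inter_of_injOn [CompletelyRegularSpace X] {Y : Type*} [TopologicalSpace Y]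
    [MetrizableSpace Y] (hA : IsCCompact A) (f : C(X, Y)) (hf : InjOn f A) {K : Set X}
    (hK : IsClosed K) : IsClosed (f '' (A ∩ K)) := by
  refine isClosed_of_closure_subset fun y hy => ?_
  obtain ⟨a, ha, rfl⟩ : y ∈ f '' A :=
    closure_minimal (image_mono inter_subset_left) (hA.isClosed_image f) hy
  refine mem_image_of_mem f ⟨ha, ?_⟩
  by_contra haK
  obtain ⟨g, hg, hga, hgK⟩ := CompletelyRegularSpace.completely_regular a K hK haK
  let g' : C(X, ℝ) := ⟨fun x => g x, by fun_prop⟩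
  have hsub : A ∩ K ⊆ A ∩ g' ⁻¹' {1} := fun x hx => ⟨hx.1, by simp [g', hgK hx.2]⟩
  obtain ⟨b, ⟨hb, hgb⟩, hfb⟩ : f a ∈ f '' (A ∩ g' ⁻¹' {1}) :=
    closure_minimal (image_mono hsub)
      ((hA.inter_preimage_s9 g' isClosed_singleton).isClosed_image f) hy
  obtain rfl : b = a := hf hb ha hfb
  simp [g', hga] at hgb

lemma isClosedEmbedding_domRestrict [CompletelyRegularSpace X] {Y : Type*} [TopologicalSpace Y]
    [MetrizableSpace Y] (hA : IsCCompact A) (f : C(X, Y)) (hf : InjOn f A) :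
    IsClosedEmbedding (A.domRestrict f) := by
  refine .of_continuous_injective_isClosedMap (f.continuous.comp continuous_subtype_val)
    hf.injective fun L hL => ?_
  obtain ⟨K, hK, rfl⟩ := isClosed_induced_iff.mp hL
  rw [domRestrict_eq, image_comp, Subtype.image_preimage_coe]
  exact hA.isClosed_image_inter_of_injOn f hf hK

theorem isCompact_and_metrizableSpace_of_injOn [CompletelyRegularSpace X] {ι : Type*}
    [Countable ι] (hA : IsCCompact A) (f : C(X, ι → ℝ)) (hf : InjOn f A) :
    IsCompact A ∧ MetrizableSpace A := by
  have hemb := hA.isClosedEmbedding_domRestrict f hf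
  refine ⟨?_, hemb.isEmbedding.metrizableSpace⟩
  rw [isCompact_iff_isCompact_univ, hemb.isInducing.isCompact_iff, image_univ, range_domRestrict]
  exact hA.isCompact_image_pi f

end IsCCompact

lemma injOn_pi_of_denseRange [T35Space X] {t : TopologicalSpace C(X, ℝ)}
    (heval : ∀ x ∈ A, Continuous[t, _] fun g : C(X, ℝ) => g x) {ι : Type*} {f : ι → C(X, ℝ)}
    (hf : @DenseRange _ t _ f) : InjOn (ContinuousMap.pi f) A := by
  intro x hx y hy hxy
  have eval_eq : (fun g : C(X, ℝ) => g x) = fun g => g y :=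
    @DenseRange.equalizer _ _ _ t _ _ _ hf _ _ (heval x hx) (heval y hy) hxy
  by_contra hne
  obtain ⟨g, hg, hgxy⟩ := separatesPoints_continuous_of_t35Space hne
  exact hgxy (congrFun eval_eq ⟨g, hg⟩)

lemma continuous_eval_of_singleton_mem {lam : Set (Set X)} {x : X} (hx : {x} ∈ lam) :
    Continuous[setOpenTopology lam, _] fun g : C(X, ℝ) => g x := by
  refine @Continuous.mk _ _ (setOpenTopology lam) _ _ fun U hU => ?_
  refine isOpen_generateFrom_of_mem ⟨{x}, hx, U, hU, ?_⟩
  ext g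
  simp only [mem_preimage, mem_ofPred_eq, image_singleton, singleton_subset_iff]

lemma MemPsi.singleton_mem [T1Space X] {lam : Set (Set X)} (hlam : MemPsi lam) (hA : A ∈ lam)
    {x : X} (hx : x ∈ A) : {x} ∈ lam :=
  hlam.hereditary A hA {x} (singleton_subset_iff.mpr hx) (singleton_nonempty x)
    isClosed_singleton (.singleton x)

theorem mem_lam_compact_metrizable_of_separable_general [T35Space X]
    {t : TopologicalSpace C(X, ℝ)} (hsep : @SeparableSpace C(X, ℝ) t) (hA : IsCCompact A)
    (heval : ∀ x ∈ A, Continuous[t, _] fun g : C(X, ℝ) => g x) :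
    IsCompact A ∧ MetrizableSpace A := by
  obtain ⟨D, hDc, hD⟩ := @exists_countable_dense _ t hsep
  have : Countable D := hDc.to_subtype
  exact hA.isCompact_and_metrizableSpace_of_injOn (.pi Subtype.val)
    (injOn_pi_of_denseRange heval (@Dense.denseRange_val _ t _ hD))

end

/-- For a Tychonoff space `X` and `λ ∈ Ψ`, if `C_λ(X)` is separable, then
every element of `λ` is a metrizable compact subset of `X`. -/
theorem mem_lam_compact_metrizable_of_separable
    {X : Type*} [TopologicalSpace X] [T35Space X]
    (lam : Set (Set X)) (hlam : MemPsi lam)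
    (hsep : @SeparableSpace C(X, ℝ) (setOpenTopology lam)) :
    ∀ A ∈ lam, IsCompact A ∧ TopologicalSpace.MetrizableSpace A :=
  fun A hA => mem_lam_compact_metrizable_of_separable_general hsep (hlam.ccompact A hA)
    fun _ hx => continuous_eval_of_singleton_mem (hlam.singleton_mem hA hx)
end
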